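/- arXiv:0810.0924 — 5 statements merged into one kernel-verified Lean document; each statement's English description precedes it below -/
import Mathlib

section
/- Let p be a prime number, A a commutative ring of characteristic p, and τ ∈ A a unit. For 1 ≤ i ≤ p−1 let c_i ∈ A denote the image, under the canonical ring homomorphism ℤ/pℤ → A, of the inverse of i!·(p−i)! in ℤ/pℤ. Define a ⋆ b = a + b + τ⁻¹·Σ_{i=1}^{p−1} c_i·a^i·b^{p−i}. Then the set {a ∈ A | a^p = 0} is an abelian group under ⋆: it is closed under ⋆ (i.e. (a ⋆ b)^p = 0 whenever a^p = b^p = 0), ⋆ is commutative and associative on this set, 0 is a neutral element, and every element of this set has a ⋆-inverse in this set. -/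
/-!
Let `Q(a,b) = ((a+b)^p - a^p - b^p)/p`, an integral polynomial. Since
`choose p i / p = (p-1)!/(i!(p-i)!)` and `(p-1)! = -1` modulo `p` (Wilson), the Oort–Tate law is
`a ⋆ b = a + b - τ⁻¹ Q(a,b)` (`oortTateStar_eq`).

The polynomial `Q` is a symmetric 2-cocycle: `Q(a,b) + Q(a+b,c) = Q(b,c) + Q(a,b+c)`, because over
`ℤ[X₀,X₁,X₂]` both sides become `(a+b+c)^p - a^p - b^p - c^p` after multiplication by `p`. If
`w² = 0` then `Q(w,x) = w x^(p-1)`, so the cocycle identity yields the first-order expansion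
`Q(s+w,c) = Q(s,c) + w ((s+c)^(p-1) - s^(p-1))`.

If `a^p = b^p = 0`, every monomial in `a, b` of degree at least `2p-1` vanishes, hence
`Q(a,b)² = 0` and `Q(a,b) (a+b)^(p-1) = 0`. Writing `t = a+b+c`, `u = τ⁻¹` and
`K = Q(a,b) + Q(a+b,c)`, these facts give `(a ⋆ b) ⋆ c = t - u K + u² K t^(p-1)`; as `K` is
symmetric in `a, b, c`, associativity follows. The inverse of `a` is `-a`, since every term of
`Q(a,-a)` is a multiple of `a^p`.
-/

open Finset

/-- The Oort–Tate composition law `a ⋆ b = a + b + τ⁻¹ ∑_{i=1}^{p-1} cᵢ aⁱ b^{p-i}`,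
where `cᵢ` is the image in `A` of the inverse of `i!(p-i)!` in `ℤ/pℤ`. -/
noncomputable def oortTateStar (p : ℕ) {A : Type*} [CommRing A] [CharP A p] (τ : Aˣ)
    (a b : A) : A :=
  a + b + (↑τ⁻¹ : A) * ∑ i ∈ Finset.Icc 1 (p - 1),
    ZMod.castHom dvd_rfl A ((↑(Nat.factorial i) * ↑(Nat.factorial (p - i)) : ZMod p)⁻¹) *
      a ^ i * b ^ (p - i)

namespace OortTate

/-- The value at `(a, b)` of the integral polynomial `((X+Y)^p - X^p - Y^p)/p`; the natural-number
division `p.choose i / p` is exact for prime `p` and `0 < i < p`. -/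
def Q (p : ℕ) {R : Type*} [CommRing R] (a b : R) : R :=
  ∑ i ∈ Finset.Icc 1 (p - 1), ((p.choose i / p : ℕ) : R) * a ^ i * b ^ (p - i)

lemma map_Q (p : ℕ) {R S : Type*} [CommRing R] [CommRing S] (f : R →+* S) (a b : R) :
    f (Q p a b) = Q p (f a) (f b) := by
  simp [Q]

variable {p : ℕ} {R : Type*} [CommRing R]

lemma Q_comm (a b : R) : Q p a b = Q p b a := by
  unfold Q
  refine Finset.sum_bij' (fun i _ => p - i) (fun i _ => p - i) ?_ ?_ ?_ ?_ ?_
  · intro i hi; simp only [Finset.mem_Icc] at hi ⊢; omega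
  · intro i hi; simp only [Finset.mem_Icc] at hi ⊢; omega
  · intro i hi; simp only [Finset.mem_Icc] at hi ⊢; omega
  · intro i hi; simp only [Finset.mem_Icc] at hi ⊢; omega
  · intro i hi
    simp only [Finset.mem_Icc] at hi
    rw [Nat.choose_symm (by omega), Nat.sub_sub_self (by omega)]
    ring

lemma p_mul_Q (hp : p.Prime) (a b : R) : (p : R) * Q p a b = (a + b) ^ p - a ^ p - b ^ p := by
  have h2 := hp.two_le
  obtain ⟨n, rfl⟩ : ∃ n, p = n + 1 := ⟨p - 1, by omega⟩
  have hI : Finset.Icc 1 (n + 1 - 1) = Finset.Ico 1 (n + 1) := by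
    ext; simp only [Finset.mem_Icc, Finset.mem_Ico]; omega
  have key : ((n + 1 : ℕ) : R) * Q (n + 1) a b =
      ∑ i ∈ Finset.Ico 1 (n + 1), a ^ i * b ^ (n + 1 - i) * ((n + 1).choose i : R) := by
    rw [Q, hI, Finset.mul_sum]
    refine Finset.sum_congr rfl fun i hi => ?_
    simp only [Finset.mem_Ico] at hi
    have hd : (n + 1) ∣ (n + 1).choose i := hp.dvd_choose_self (by omega) (by omega)
    have hc : (((n + 1).choose i : ℕ) : R) =
        ((n + 1 : ℕ) : R) * (((n + 1).choose i / (n + 1) : ℕ) : R) := by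
      rw [← Nat.cast_mul, Nat.mul_div_cancel' hd]
    rw [hc]; ring
  rw [key, add_pow, Finset.sum_range_succ, Finset.range_eq_Ico,
    Finset.sum_eq_sum_Ico_succ_bot (Nat.succ_pos n)]
  simp

/-- The 2-cocycle identity for `Q`, obtained by cancelling `p` over `ℤ[X₀,X₁,X₂]` and
specializing. -/
lemma Q_cocycle (hp : p.Prime) (a b c : R) :
    Q p a b + Q p (a + b) c = Q p b c + Q p a (b + c) := by
  have h : ∀ x y z : MvPolynomial (Fin 3) ℤ,
      Q p x y + Q p (x + y) z = Q p y z + Q p x (y + z) := by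
    intro x y z
    have hp0 : (p : MvPolynomial (Fin 3) ℤ) ≠ 0 := Nat.cast_ne_zero.mpr hp.ne_zero
    apply mul_left_cancel₀ hp0
    rw [mul_add, mul_add, p_mul_Q hp, p_mul_Q hp, p_mul_Q hp, p_mul_Q hp, add_assoc x y z]
    ring
  have := congrArg (MvPolynomial.aeval (R := ℤ) ![a, b, c]).toRingHom
    (h (MvPolynomial.X 0) (MvPolynomial.X 1) (MvPolynomial.X 2))
  simpa only [map_add, map_Q, AlgHom.toRingHom_eq_coe, RingHom.coe_coe, MvPolynomial.aeval_X,
    Matrix.cons_val_zero, Matrix.cons_val_one, Matrix.cons_val] using this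

lemma monomial_eq_zero {a b : R} (ha : a ^ p = 0) (hb : b ^ p = 0) {i j : ℕ}
    (h : 2 * p ≤ i + j + 1) : a ^ i * b ^ j = 0 := by
  rcases le_total p i with hi | hi
  · rw [pow_eq_zero_of_le hi ha, zero_mul]
  · rcases le_or_gt p j with hj | hj
    · rw [pow_eq_zero_of_le hj hb, mul_zero]
    · have : i = p := by omega
      rw [this, ha, zero_mul]

lemma Q_sq {a b : R} (ha : a ^ p = 0) (hb : b ^ p = 0) : Q p a b ^ 2 = 0 := by
  rw [sq, Q, Finset.sum_mul_sum]
  refine Finset.sum_eq_zero fun i hi => Finset.sum_eq_zero fun j hj => ?_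
  simp only [Finset.mem_Icc] at hi hj
  have := monomial_eq_zero ha hb (i := i + j) (j := (p - i) + (p - j)) (by omega)
  rw [pow_add, pow_add] at this
  linear_combination ((p.choose i / p : ℕ) : R) * ((p.choose j / p : ℕ) : R) * this

lemma Q_mul_add_pow {a b : R} (ha : a ^ p = 0) (hb : b ^ p = 0) :
    Q p a b * (a + b) ^ (p - 1) = 0 := by
  rw [Q, add_pow, Finset.sum_mul_sum]
  refine Finset.sum_eq_zero fun i hi => Finset.sum_eq_zero fun j hj => ?_
  simp only [Finset.mem_Icc, Finset.mem_range] at hi hj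
  have := monomial_eq_zero ha hb (i := i + j) (j := (p - i) + (p - 1 - j)) (by omega)
  rw [pow_add, pow_add] at this
  linear_combination ((p.choose i / p : ℕ) : R) * ((p - 1).choose j : R) * this

lemma Q_of_sq_eq_zero (hp : p.Prime) {w : R} (hw : w ^ 2 = 0) (x : R) :
    Q p w x = w * x ^ (p - 1) := by
  have h2 := hp.two_le
  rw [Q, Finset.sum_eq_single_of_mem 1 (by simp only [Finset.mem_Icc]; omega)]
  · simp [Nat.div_self hp.pos]
  · intro i hi h1
    simp only [Finset.mem_Icc] at hi
    rw [pow_eq_zero_of_le (show 2 ≤ i by omega) hw]; ring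

/-- First-order expansion of `Q` in its first variable. -/
lemma Q_add_of_sq_eq_zero (hp : p.Prime) {w : R} (hw : w ^ 2 = 0) (s c : R) :
    Q p (s + w) c = Q p s c + w * (s + c) ^ (p - 1) - w * s ^ (p - 1) := by
  have h := Q_cocycle hp w s c
  rw [Q_of_sq_eq_zero hp hw, Q_of_sq_eq_zero hp hw, add_comm w s] at h
  linear_combination h

/-- Modulo a prime `p`, Wilson's theorem identifies `1/(i!(p-i)!)` with `-(choose p i / p)`. -/
lemma inv_factorial (hp : p.Prime) {i : ℕ} (h1 : 1 ≤ i) (h2 : i ≤ p - 1) :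
    ((i.factorial : ZMod p) * ((p - i).factorial : ZMod p))⁻¹
      = -((p.choose i / p : ℕ) : ZMod p) := by
  have : Fact p.Prime := ⟨hp⟩
  have hd : p ∣ p.choose i := hp.dvd_choose_self (by omega) (by omega)
  have hN : (p.choose i / p) * i.factorial * (p - i).factorial = (p - 1).factorial := by
    apply Nat.eq_of_mul_eq_mul_left hp.pos
    rw [Nat.mul_factorial_pred hp.ne_zero, ← mul_assoc, ← mul_assoc, Nat.mul_div_cancel' hd]
    exact Nat.choose_mul_factorial_mul_factorial (by omega)
  have hZ : ((p.choose i / p : ℕ) : ZMod p) * i.factorial * (p - i).factorial = -1 := by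
    rw [← ZMod.wilsons_lemma p, ← hN]; push_cast; rfl
  symm
  refine eq_inv_of_mul_eq_one_left ?_
  linear_combination -hZ

lemma oortTateStar_eq (hp : p.Prime) [CharP R p] (τ : Rˣ) (a b : R) :
    oortTateStar p τ a b = a + b - (↑τ⁻¹ : R) * Q p a b := by
  rw [oortTateStar, Q, sub_eq_add_neg, ← mul_neg, ← Finset.sum_neg_distrib]
  congr 2
  refine Finset.sum_congr rfl fun i hi => ?_
  simp only [Finset.mem_Icc] at hi
  rw [inv_factorial hp hi.1 hi.2, map_neg, map_natCast]
  ring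

lemma add_pow_eq_zero (hp : p.Prime) [CharP R p] {a b : R} (ha : a ^ p = 0) (hb : b ^ p = 0) :
    (a + b) ^ p = 0 := by
  have h := p_mul_Q hp a b
  rw [CharP.cast_eq_zero, ha, hb] at h
  linear_combination -h

/-- A formula for `(a ⋆ b) ⋆ c` in which only `K = Q(a,b) + Q(a+b,c)` is not visibly symmetric. -/
lemma star_star (hp : p.Prime) [CharP R p] (u : R) {a b c : R}
    (ha : a ^ p = 0) (hb : b ^ p = 0) (hc : c ^ p = 0) :
    (a + b - u * Q p a b) + c - u * Q p (a + b - u * Q p a b) c =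
      (a + b + c) - u * (Q p a b + Q p (a + b) c)
        + u ^ 2 * (Q p a b + Q p (a + b) c) * (a + b + c) ^ (p - 1) := by
  have hw : (-(u * Q p a b)) ^ 2 = 0 := by
    linear_combination u ^ 2 * Q_sq ha hb
  have h1 := Q_mul_add_pow ha hb
  have h2 := Q_mul_add_pow (add_pow_eq_zero hp ha hb) hc
  rw [sub_eq_add_neg (a + b), Q_add_of_sq_eq_zero hp hw]
  linear_combination (-u ^ 2) * h1 - u ^ 2 * h2

end OortTate

/-- Let `p` be a prime, `A` a commutative ring of characteristic `p`, and
`τ ∈ A` a unit. Then the set `{a ∈ A | a^p = 0}` is an abelian group under the Oort–Tate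
composition law `⋆`: it is closed under `⋆`, the law is commutative and associative on it,
`0` is a neutral element, and every element has a `⋆`-inverse. -/
theorem oortTateStar_abelian_group (p : ℕ) (hp : p.Prime) (A : Type*) [CommRing A]
    [CharP A p] (τ : Aˣ) :
    (∀ a b : A, a ^ p = 0 → b ^ p = 0 → (oortTateStar p τ a b) ^ p = 0) ∧
    (∀ a b : A, a ^ p = 0 → b ^ p = 0 → oortTateStar p τ a b = oortTateStar p τ b a) ∧
    (∀ a b c : A, a ^ p = 0 → b ^ p = 0 → c ^ p = 0 →
      oortTateStar p τ (oortTateStar p τ a b) c = oortTateStar p τ a (oortTateStar p τ b c)) ∧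
    (∀ a : A, a ^ p = 0 → oortTateStar p τ a 0 = a ∧ oortTateStar p τ 0 a = a) ∧
    (∀ a : A, a ^ p = 0 → ∃ b : A, b ^ p = 0 ∧ oortTateStar p τ a b = 0) := by
  have hsw : ∀ a b : A, oortTateStar p τ a b = oortTateStar p τ b a := by
    intro a b
    rw [OortTate.oortTateStar_eq hp, OortTate.oortTateStar_eq hp, OortTate.Q_comm, add_comm a b]
  refine ⟨?_, fun a b _ _ => hsw a b, ?_, ?_, ?_⟩
  · intro a b ha hb
    rw [OortTate.oortTateStar_eq hp, sub_eq_add_neg]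
    refine OortTate.add_pow_eq_zero hp (OortTate.add_pow_eq_zero hp ha hb) ?_
    refine pow_eq_zero_of_le hp.two_le ?_
    linear_combination (↑τ⁻¹ : A) ^ 2 * OortTate.Q_sq ha hb
  · intro a b c ha hb hc
    rw [hsw a (oortTateStar p τ b c)]
    simp only [OortTate.oortTateStar_eq hp]
    rw [OortTate.star_star hp _ ha hb hc, OortTate.star_star hp _ hb hc ha,
      OortTate.Q_cocycle hp a b c, OortTate.Q_comm a (b + c), show b + c + a = a + b + c by ring]
  · have h0 : ∀ a : A, oortTateStar p τ a 0 = a := by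
      intro a
      rw [OortTate.oortTateStar_eq hp, OortTate.Q_comm,
        OortTate.Q_of_sq_eq_zero hp (zero_pow two_ne_zero)]
      ring
    exact fun a _ => ⟨h0 a, by rw [hsw, h0]⟩
  · intro a ha
    refine ⟨-a, by rw [neg_pow, ha, mul_zero], ?_⟩
    have hQ : OortTate.Q p a (-a) = 0 := by
      refine Finset.sum_eq_zero fun i hi => ?_
      simp only [Finset.mem_Icc] at hi
      have h : a ^ i * a ^ (p - i) = 0 := by
        rw [← pow_add, Nat.add_sub_cancel' (by omega), ha]
      rw [neg_pow]
      linear_combination ((p.choose i / p : ℕ) : A) * (-1) ^ (p - i) * h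
    rw [OortTate.oortTateStar_eq hp, hQ]
    ring
end

section
/- Let F ⊆ L be a finite Galois extension of fields whose Galois group H = Gal(L/F) is abelian. Let H act on the F-algebra L ⊗_F L diagonally, by σ·(x ⊗ y) = σ(x) ⊗ σ(y). Then the F-subalgebra of H-invariant elements of L ⊗_F L is isomorphic, as an F-algebra, to the product of |H| copies of F, i.e. to the F-algebra of all functions H → F with pointwise operations. -/
/-!
The map `x ⊗ y ↦ (σ ↦ x * σ y)` is an isomorphism of `L ⊗[F] L` with the algebra of functions
`Gal(L/F) → L`: it is surjective because the automorphisms of `L` are linearly independent over `L`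
(Dedekind), and both sides have dimension `[L : F] = |Gal(L/F)|` over `L`. Since the Galois group is
abelian, this isomorphism carries the diagonal action of `τ` to the pointwise application of `τ`,
because `τ x * σ (τ y) = τ (x * σ y)`. The invariants therefore correspond to the functions with
values in the fixed field, which is `F`.
-/

open TensorProduct

/-- The subalgebra of elements of `L ⊗[F] L` invariant under the diagonal Galois action
`σ · (x ⊗ y) = σ(x) ⊗ σ(y)`. -/
noncomputable def diagonalInvariants (F L : Type*) [Field F] [Field L] [Algebra F L] :
    Subalgebra F (L ⊗[F] L) :=
  ⨅ σ : L ≃ₐ[F] L,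
    AlgHom.equalizer (Algebra.TensorProduct.congr σ σ).toAlgHom (AlgHom.id F (L ⊗[F] L))

section

variable (F L : Type*) [Field F] [Field L] [Algebra F L]

/-- The Galois splitting map `x ⊗ y ↦ (σ ↦ x * σ y)`, linear over the left factor `L`. -/
noncomputable def galoisSplit : L ⊗[F] L →ₐ[L] ((L ≃ₐ[F] L) → L) :=
  AlgHom.pi fun σ =>
    Algebra.TensorProduct.lift (AlgHom.id L L) (σ : L →ₐ[F] L) fun _ _ => Commute.all _ _

@[simp]
lemma galoisSplit_tmul (x y : L) (σ : L ≃ₐ[F] L) : galoisSplit F L (x ⊗ₜ y) σ = x * σ y := by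
  simp [galoisSplit]

lemma galoisSplit_surjective [FiniteDimensional F L] :
    Function.Surjective (galoisSplit F L) := by
  classical
  have key : LinearMap.range (galoisSplit F L).toLinearMap = ⊤ := by
    by_contra hne
    -- A proper subspace is killed by a nonzero functional, whose coefficients give a
    -- linear dependence between the automorphisms.
    obtain ⟨φ, hφ, hle⟩ := Submodule.exists_le_ker_of_lt_top _ (lt_top_iff_ne_top.2 hne)
    have hli : LinearIndependent L (fun σ : L ≃ₐ[F] L => (σ : L →ₐ[F] L).toLinearMap) :=
      (linearIndependent_toLinearMap F L L).comp (fun σ : L ≃ₐ[F] L => (σ : L →ₐ[F] L))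
        AlgEquiv.coe_toAlgHom_injective
    have hz := Fintype.linearIndependent_iff.1 hli (fun σ => φ (Pi.single σ 1)) (by
      ext y
      have h : φ (galoisSplit F L (1 ⊗ₜ y)) = 0 := hle ⟨1 ⊗ₜ y, rfl⟩
      rw [LinearMap.pi_apply_eq_sum_univ φ] at h
      have hs (σ : L ≃ₐ[F] L) :
          (Pi.single σ 1 : (L ≃ₐ[F] L) → L) = fun τ => if σ = τ then 1 else 0 := by
        ext τ
        simp [Pi.single_apply, eq_comm]
      simpa [mul_comm, hs] using h)
    apply hφ
    ext σ
    simpa using hz σ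
  exact LinearMap.range_eq_top.1 key

lemma galoisSplit_bijective [FiniteDimensional F L] [IsGalois F L] :
    Function.Bijective (galoisSplit F L) := by
  have hs := galoisSplit_surjective F L
  have hd : Module.finrank L (L ⊗[F] L) = Module.finrank L ((L ≃ₐ[F] L) → L) := by
    rw [Module.finrank_baseChange, Module.finrank_fintype_fun_eq_card,
      ← Nat.card_eq_fintype_card, IsGalois.card_aut_eq_finrank]
  exact ⟨(LinearMap.injective_iff_surjective_of_finrank_eq_finrank
    (f := (galoisSplit F L).toLinearMap) hd).2 hs, hs⟩

/-- Commutativity of the Galois group enters here: `τ x * σ (τ y) = τ (x * σ y)`. -/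
lemma galoisSplit_diagonal (habelian : ∀ σ τ : L ≃ₐ[F] L, σ * τ = τ * σ)
    (σ τ : L ≃ₐ[F] L) (z : L ⊗[F] L) :
    galoisSplit F L (Algebra.TensorProduct.congr τ τ z) σ = τ (galoisSplit F L z σ) := by
  induction z with
  | zero => simp
  | add a b ha hb => simp only [map_add, Pi.add_apply, ha, hb]
  | tmul x y =>
    have h : σ (τ y) = τ (σ y) := DFunLike.congr_fun (habelian σ τ) y
    simp [h]

lemma mem_diagonalInvariants_iff (z : L ⊗[F] L) :
    z ∈ diagonalInvariants F L ↔
      ∀ τ : L ≃ₐ[F] L, Algebra.TensorProduct.congr τ τ z = z := by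
  simp only [diagonalInvariants, Algebra.mem_iInf]
  rfl

/-- An element is invariant exactly when its image under `galoisSplit` takes values in `F`. -/
lemma mem_diagonalInvariants_iff_galoisSplit [FiniteDimensional F L] [IsGalois F L]
    (habelian : ∀ σ τ : L ≃ₐ[F] L, σ * τ = τ * σ) (z : L ⊗[F] L) :
    z ∈ diagonalInvariants F L ↔
      ∃ f : (L ≃ₐ[F] L) → F, ∀ σ, algebraMap F L (f σ) = galoisSplit F L z σ := by
  rw [mem_diagonalInvariants_iff]
  constructor
  · intro h
    have hr : ∀ σ, ∃ a : F, algebraMap F L a = galoisSplit F L z σ := fun σ =>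
      IntermediateField.mem_bot.1 <| (IsGalois.mem_bot_iff_fixed _).2 fun τ => by
        rw [← galoisSplit_diagonal F L habelian, h τ]
    choose f hf using hr
    exact ⟨f, hf⟩
  · rintro ⟨f, hf⟩ τ
    apply (galoisSplit_bijective F L).1
    ext σ
    rw [galoisSplit_diagonal F L habelian, ← hf, AlgEquiv.commutes]

end

/-- Let `F ⊆ L` be a finite Galois extension of fields with abelian Galois
group `H = Gal(L/F)`. Let `H` act diagonally on `L ⊗_F L` by `σ · (x ⊗ y) = σ(x) ⊗ σ(y)`.
Then the `F`-subalgebra of `H`-invariant elements of `L ⊗_F L` is isomorphic, as an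
`F`-algebra, to the `F`-algebra of all functions `H → F` with pointwise operations. -/
theorem diagonal_invariants_of_tensor_square
    (F L : Type*) [Field F] [Field L] [Algebra F L] [FiniteDimensional F L] [IsGalois F L]
    (habelian : ∀ σ τ : L ≃ₐ[F] L, σ * τ = τ * σ) :
    Nonempty (diagonalInvariants F L ≃ₐ[F] ((L ≃ₐ[F] L) → F)) := by
  let e : L ⊗[F] L ≃ₐ[F] ((L ≃ₐ[F] L) → L) :=
    (AlgEquiv.ofBijective (galoisSplit F L) (galoisSplit_bijective F L)).restrictScalars F
  let ι : ((L ≃ₐ[F] L) → F) →ₐ[F] ((L ≃ₐ[F] L) → L) :=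
    AlgHom.pi fun σ => (Algebra.ofId F L).comp (Pi.evalAlgHom F _ σ)
  let ψ : ((L ≃ₐ[F] L) → F) →ₐ[F] L ⊗[F] L := (e.symm : _ →ₐ[F] _).comp ι
  have hψ : Function.Injective ψ := by
    intro f g h
    have h' : ι f = ι g := e.symm.injective h
    ext σ
    exact (algebraMap F L).injective (congrFun h' σ)
  have hrange : ψ.range = diagonalInvariants F L := by
    ext z
    rw [mem_diagonalInvariants_iff_galoisSplit F L habelian]
    refine exists_congr fun f => ?_
    change e.symm (ι f) = z ↔ _
    rw [AlgEquiv.symm_apply_eq]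
    exact funext_iff
  exact ⟨((AlgEquiv.ofInjective ψ hψ).trans (Subalgebra.equivOfEq _ _ hrange)).symm⟩
end

section
/- Every normal subgroup of SL(2, F₃) has order 1, 2, 8 or 24, and for each of these four orders there is exactly one normal subgroup of SL(2, F₃) having that order. (The normal subgroups are the trivial group, the center {±I} of order 2, the quaternion group Q of order 8, and SL(2, F₃) itself.) -/
/-!
Write `G = SL(2, F₃)`, `Z = center G = {±1}` and `Q = {g | g = ±1 ∨ tr g = 0}`, the quaternion
group, whose six noncentral elements form one conjugacy class. If a normal subgroup `H` is not
contained in `Z`, it contains a noncentral `g`, and some commutator `x g x⁻¹ g⁻¹ ∈ H` has trace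
zero. Hence `H` contains the class of all trace-zero elements, and therefore `Q`, since the square
of a trace-zero element is `-1`. So every normal `H` satisfies `H ≤ Z` or `Q ≤ H`. As `|Z| = 2` and
`Q` has index `24 / 8 = 3`, Lagrange's theorem leaves only the orders `1, 2` and `8, 24`, and
in each case the order determines `H`. The facts about individual elements are decided by
running through the finite group.
-/

open Matrix

local notation "G" => SpecialLinearGroup (Fin 2) (ZMod 3)

set_option maxRecDepth 100000

theorem card_sl2 : Nat.card G = 24 := by
  rw [Nat.card_eq_fintype_card]; decide +kernel

/-- The elements that are `±1` or have trace zero. -/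
def InQ (g : G) : Prop := g = 1 ∨ g = -1 ∨ g.1.trace = 0

instance : DecidablePred InQ := fun g =>
  inferInstanceAs (Decidable (g = 1 ∨ g = -1 ∨ g.1.trace = 0))

theorem InQ.mul : ∀ {a b : G}, InQ a → InQ b → InQ (a * b) := by decide +kernel

theorem InQ.inv : ∀ {a : G}, InQ a → InQ a⁻¹ := by decide +kernel

/-- The quaternion subgroup of `SL(2, F₃)`, encoded as the set of elements that are `±1` or have
trace zero. -/
def Q : Subgroup G where
  carrier := {g | InQ g}
  mul_mem' := InQ.mul
  one_mem' := Or.inl rfl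
  inv_mem' := InQ.inv

theorem Q_normal : Q.Normal :=
  ⟨by
    rintro n (rfl | rfl | hn) g
    · exact Or.inl (by simp)
    · exact Or.inr (Or.inl (by simp))
    · refine Or.inr (Or.inr ?_)
      have h : ((g * n).1 * (g⁻¹).1).trace = (g⁻¹ * (g * n)).1.trace := trace_mul_comm _ _
      rw [inv_mul_cancel_left] at h
      exact h.trans hn⟩

theorem card_Q : Nat.card Q = 8 := by
  change Nat.card {g : G // InQ g} = 8
  rw [Nat.card_eq_fintype_card]; decide +kernel

theorem mem_center_iff_eq (g : G) : g ∈ Subgroup.center G ↔ g = 1 ∨ g = -1 := by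
  rw [Subgroup.mem_center_iff]
  revert g
  decide +kernel

theorem card_center : Nat.card (Subgroup.center G) = 2 := by
  rw [Nat.card_congr (Equiv.subtypeEquivRight mem_center_iff_eq), Nat.card_eq_fintype_card]
  decide +kernel

theorem exists_commutator_trace_zero :
    ∀ g : G, ¬(g = 1 ∨ g = -1) → ∃ x : G, (x * g * x⁻¹ * g⁻¹).1.trace = 0 := by
  decide +kernel

theorem conj_of_trace_zero :
    ∀ g : G, g.1.trace = 0 → ∀ h : G, h.1.trace = 0 → ∃ x : G, x * g * x⁻¹ = h := by
  decide +kernel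

theorem sq_of_trace_zero : ∀ g : G, g.1.trace = 0 → g * g = -1 := by decide +kernel

theorem le_center_or_Q_le (H : Subgroup G) (hH : H.Normal) :
    H ≤ Subgroup.center G ∨ Q ≤ H := by
  refine or_iff_not_imp_left.2 fun hZ => ?_
  obtain ⟨g, hg, hgZ⟩ := SetLike.not_le_iff_exists.1 hZ
  rw [mem_center_iff_eq] at hgZ
  obtain ⟨x, hx⟩ := exists_commutator_trace_zero g hgZ
  have hi := H.mul_mem (hH.conj_mem g hg x) (H.inv_mem hg)
  rintro q (rfl | rfl | hq)
  · exact H.one_mem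
  · rw [← sq_of_trace_zero _ hx]
    exact H.mul_mem hi hi
  · obtain ⟨y, rfl⟩ := conj_of_trace_zero _ hx q hq
    exact hH.conj_mem _ hi y

/-- The dichotomy `le_center_or_Q_le` refined by Lagrange's theorem. -/
theorem normal_cases (H : Subgroup G) (hH : H.Normal) :
    H = ⊥ ∨ H = Subgroup.center G ∨ H = Q ∨ H = ⊤ := by
  rcases le_center_or_Q_le H hH with h | h
  · have hd := Subgroup.card_dvd_of_le h
    rw [card_center] at hd
    rcases (Nat.dvd_prime Nat.prime_two).1 hd with h1 | h2
    · exact Or.inl (Subgroup.card_eq_one.1 h1)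
    · exact Or.inr (Or.inl (Subgroup.eq_of_le_of_card_ge h (by rw [card_center, h2])))
  · obtain ⟨k, hk⟩ := Subgroup.card_dvd_of_le h
    have hd := Subgroup.card_subgroup_dvd_card H
    rw [card_Q] at hk
    rw [card_sl2, hk, show 24 = 8 * 3 from rfl] at hd
    rcases (Nat.dvd_prime Nat.prime_three).1 (Nat.dvd_of_mul_dvd_mul_left (by norm_num) hd)
      with rfl | rfl
    · exact Or.inr (Or.inr (Or.inl (Subgroup.eq_of_le_of_card_ge h (by rw [card_Q, hk])).symm))
    · exact Or.inr (Or.inr (Or.inr (Subgroup.eq_top_of_card_eq H (by rw [hk, card_sl2]))))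

/-- Every normal subgroup of `SL(2, F₃)` has order `1`, `2`, `8` or `24`,
and for each of these four orders there is exactly one normal subgroup of `SL(2, F₃)`
having that order. -/
theorem sl2_f3_normal_subgroups :
    (∀ H : Subgroup (Matrix.SpecialLinearGroup (Fin 2) (ZMod 3)), H.Normal →
      Nat.card H = 1 ∨ Nat.card H = 2 ∨ Nat.card H = 8 ∨ Nat.card H = 24) ∧
    (∀ n ∈ ({1, 2, 8, 24} : Set ℕ),
      ∃! H : Subgroup (Matrix.SpecialLinearGroup (Fin 2) (ZMod 3)),
        H.Normal ∧ Nat.card H = n) := by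
  have hbot : Nat.card (⊥ : Subgroup G) = 1 := Subgroup.card_bot
  have htop : Nat.card (⊤ : Subgroup G) = 24 := by rw [Subgroup.card_top, card_sl2]
  have hZ := card_center
  have hQ := card_Q
  refine ⟨fun H hH => ?_, ?_⟩
  · rcases normal_cases H hH with rfl | rfl | rfl | rfl <;> omega
  · rintro n (rfl | rfl | rfl | rfl)
    · refine ⟨⊥, ⟨inferInstance, hbot⟩, fun H ⟨hH, hc⟩ => ?_⟩
      rcases normal_cases H hH with rfl | rfl | rfl | rfl <;> first | rfl | omega
    · refine ⟨Subgroup.center G, ⟨inferInstance, hZ⟩, fun H ⟨hH, hc⟩ => ?_⟩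
      rcases normal_cases H hH with rfl | rfl | rfl | rfl <;> first | rfl | omega
    · refine ⟨Q, ⟨Q_normal, hQ⟩, fun H ⟨hH, hc⟩ => ?_⟩
      rcases normal_cases H hH with rfl | rfl | rfl | rfl <;> first | rfl | omega
    · refine ⟨⊤, ⟨inferInstance, htop⟩, fun H ⟨hH, hc⟩ => ?_⟩
      rcases normal_cases H hH with rfl | rfl | rfl | rfl <;> first | rfl | omega
end

section
/- Let p be a prime, A a commutative ring of characteristic p, and t ∈ A. Then in the polynomial ring A[X] one has the identity X^p − t^{p−1}·X = ∏_{c ∈ ℤ/pℤ} (X − c̄·t), where for c ∈ ℤ/pℤ the element c̄ ∈ A denotes its image under the canonical ring homomorphism ℤ/pℤ → A. -/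
open Polynomial

/-!
Over the field `ℤ/pℤ` the polynomial `X ^ p - X` is monic with every element of the field as a
simple root, so it equals `∏ c, (X - c)`. This identity is mapped to `A[X]`, and then all roots are
multiplied by `t` via `Polynomial.scaleRoots`. That operation is multiplicative on monic
polynomials, so it turns the product into `∏ c, (X - c t)`, and it turns `X ^ p - X` into
`X ^ p - t ^ (p - 1) X` because it multiplies the coefficient of `X ^ i` by `t ^ (p - i)`.
-/

/-- Scaling of roots commutes with products of monic linear factors. `A` may have zero divisors,
where `scaleRoots` is not multiplicative in general; here the leading coefficients multiply
to `1`. -/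
theorem prod_X_sub_C_scaleRoots {A ι : Type*} [CommRing A] [Nontrivial A] (s : Finset ι)
    (f : ι → A) (t : A) :
    (∏ i ∈ s, (X - C (f i))).scaleRoots t = ∏ i ∈ s, (X - C (f i * t)) := by
  classical
  induction s using Finset.induction_on with
  | empty => simp
  | insert a s ha ih =>
    rw [Finset.prod_insert ha, Finset.prod_insert ha, mul_scaleRoots', ih, X_sub_C_scaleRoots]
    rw [(monic_X_sub_C _).leadingCoeff, (monic_prod_X_sub_C f s).leadingCoeff]
    simp

theorem X_pow_sub_X_scaleRoots {A : Type*} [CommRing A] [Nontrivial A] {p : ℕ} (hp : 1 < p)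
    (t : A) : (X ^ p - X : A[X]).scaleRoots t = X ^ p - C (t ^ (p - 1)) * X := by
  have hdeg : (X ^ p - X : A[X]).natDegree = p := by
    rw [natDegree_sub_eq_left_of_natDegree_lt] <;> simp [hp]
  ext i
  rw [coeff_scaleRoots, hdeg]
  simp only [coeff_sub, coeff_X_pow, coeff_C_mul, coeff_X]
  by_cases h1 : i = p
  · subst h1
    simp [hp.ne]
  · by_cases h2 : 1 = i
    · subst h2
      simp [h1]
    · simp [h1, h2]

/-- Let `p` be a prime, `A` a commutative ring of characteristic `p`, and
`t ∈ A`. Then in `A[X]` one has `X^p − t^{p−1}X = ∏_{c ∈ ℤ/pℤ} (X − c̄t)`, where `c̄ ∈ A`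
is the image of `c` under the canonical ring homomorphism `ℤ/pℤ → A`. -/
theorem pow_sub_pow_mul_eq_prod (p : ℕ) (hp : p.Prime) (A : Type*) [CommRing A] [CharP A p]
    (t : A) :
    haveI : NeZero p := ⟨hp.ne_zero⟩
    (X ^ p - C (t ^ (p - 1)) * X : A[X]) =
      ∏ c : ZMod p, (X - C (ZMod.castHom dvd_rfl A c * t)) := by
  have : Fact p.Prime := ⟨hp⟩
  have : Nontrivial A := CharP.nontrivial_of_char_ne_one hp.ne_one
  have key : (X ^ p - X : (ZMod p)[X]) = ∏ c : ZMod p, (X - C c) := by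
    have hdeg := FiniteField.X_pow_card_sub_X_natDegree_eq (ZMod p) hp.one_lt
    have hroots := FiniteField.roots_X_pow_card_sub_X (ZMod p)
    rw [ZMod.card] at hroots
    have hmonic : (X ^ p - X : (ZMod p)[X]).Monic :=
      monic_X_pow_sub (by simpa using hp.one_lt)
    have h := prod_multiset_X_sub_C_of_monic_of_roots_card_eq hmonic
      (by rw [hroots, hdeg, ← Finset.card_def, Finset.card_univ, ZMod.card])
    rw [hroots] at h
    exact h.symm
  have hmap := congrArg (Polynomial.map (ZMod.castHom dvd_rfl A)) key
  simp only [Polynomial.map_sub, Polynomial.map_pow, map_X, Polynomial.map_prod, map_C] at hmap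
  rw [← X_pow_sub_X_scaleRoots hp.one_lt, hmap, prod_X_sub_C_scaleRoots]
end

section
/- Let p be an odd prime, K a field of characteristic p, and τ ∈ K with τ ≠ 0. If q ∈ K[X] is a monic irreducible polynomial of degree 2 that divides X^{p−1} − τ, then q is invariant under X ↦ −X; that is, q = X² − c for some c ∈ K (the coefficient of X in q vanishes). -/
/-!
Write `q = X² + aX + b` and `g = X ^ p - τX = X (X ^ (p - 1) - τ)`, so that `q ∣ g`. The polynomial
`q` is invariant under the reflection `X ↦ -a - X`, which swaps its roots, so `q` also divides
`g(-a - X)`. In characteristic `p` (odd) the polynomial `g` is additive and odd, hence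
`g + g(-a - X)` is the constant `τa - a ^ p`. Being divisible by the quadratic `q`, this constant
vanishes. If `a ≠ 0`, then `a ^ (p - 1) = τ`, so that `g` is a rescaling of `X ^ p - X` and splits
over `K` (`splits_X_pow_sub_C_mul_X`), which is impossible for a polynomial with an irreducible
quadratic factor. So `a = 0`.
-/

open Polynomial

/-- If `a ≠ 0` is a root of `X ^ p - τX` in characteristic `p`, then the roots of this polynomial are
the multiples of `a` by elements of the prime field, so it splits. -/
theorem splits_X_pow_sub_C_mul_X {p : ℕ} (hp : p.Prime) {K : Type*} [Field K] [CharP K p]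
    {a τ : K} (ha : a ≠ 0) (h : a ^ p = τ * a) : (X ^ p - C τ * X : K[X]).Splits := by
  have : Fact p.Prime := ⟨hp⟩
  have h1 : (X ^ p - X : (ZMod p)[X]).Splits := by
    simpa using Polynomial.splits_X_pow_nat_card_sub_X (K := ZMod p)
  have h2 : (X ^ p - X : K[X]).Splits := by
    simpa using h1.map (ZMod.castHom (dvd_refl p) K)
  have h3 := (h2.comp_of_natDegree_le_one (natDegree_C_mul_X a⁻¹ (inv_ne_zero ha)).le).C_mul (a ^ p)
  convert h3 using 1
  simp only [sub_comp, pow_comp, X_comp, mul_pow, mul_sub, ← mul_assoc, ← C_pow, ← C_mul]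
  rw [← mul_pow, mul_inv_cancel₀ ha, h, mul_assoc, mul_inv_cancel₀ ha]
  simp

/-- Let `p` be an odd prime, `K` a field of characteristic `p`, and
`τ ∈ K` nonzero. If `q ∈ K[X]` is a monic irreducible polynomial of degree `2` dividing
`X^{p−1} − τ`, then `q` is invariant under `X ↦ −X`: its coefficient of `X` vanishes, i.e.
`q = X² − c` for some `c ∈ K`. -/
theorem quadratic_factor_of_kummer_is_even
    (p : ℕ) (hp : p.Prime) (hodd : Odd p) (K : Type*) [Field K] [CharP K p]
    (τ : K) (hτ : τ ≠ 0) (q : K[X]) (hmonic : q.Monic) (hirr : Irreducible q)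
    (hdeg : q.natDegree = 2) (hdvd : q ∣ X ^ (p - 1) - C τ) :
    q.coeff 1 = 0 ∧ ∃ c : K, q = X ^ 2 - C c := by
  have : Fact p.Prime := ⟨hp⟩
  set a := q.coeff 1 with ha_def
  have hq : q = X ^ 2 + C a * X + C (q.coeff 0) := by
    have h2 : q.coeff 2 = 1 := hdeg ▸ hmonic.coeff_natDegree
    conv_lhs => rw [q.as_sum_range_C_mul_X_pow, hdeg]
    simp [Finset.sum_range_succ, h2]
    ring
  suffices ha : a = 0 by
    refine ⟨ha, -q.coeff 0, ?_⟩
    conv_lhs => rw [hq, ha]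
    simp
  have hg : (X ^ p - C τ * X : K[X]) = X * (X ^ (p - 1) - C τ) := by
    rw [mul_sub, mul_pow_sub_one hp.ne_zero, mul_comm X (C τ)]
  have hqg : q ∣ X ^ p - C τ * X := hg ▸ hdvd.mul_left X
  have hrefl : q.comp (-C a - X) = q := by
    rw [hq]
    simp only [add_comp, mul_comp, pow_comp, X_comp, C_comp]
    ring
  have hconst : q ∣ C (τ * a - a ^ p) := by
    have hcomp : q ∣ (X ^ p - C τ * X : K[X]).comp (-C a - X) := by
      obtain ⟨r, hr⟩ := hqg
      rw [hr, mul_comp, hrefl]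
      exact dvd_mul_right _ _
    have h := dvd_add hqg hcomp
    convert h using 1
    simp only [sub_comp, mul_comp, pow_comp, X_comp, C_comp,
      sub_pow_char, hodd.neg_pow, map_sub, map_mul, map_pow]
    ring
  have hpow : a ^ p = τ * a := by
    by_contra hne
    have hne' : τ * a - a ^ p ≠ 0 := sub_ne_zero.mpr (Ne.symm hne)
    have := natDegree_le_of_dvd hconst (C_ne_zero.mpr hne')
    rw [hdeg, natDegree_C] at this
    omega
  by_contra ha
  have hne : (X ^ p - C τ * X : K[X]) ≠ 0 := by
    rw [hg]
    exact mul_ne_zero X_ne_zero (X_pow_sub_C_ne_zero (Nat.sub_pos_of_lt hp.one_lt) τ)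
  have h1 := ((splits_X_pow_sub_C_mul_X hp ha hpow).of_dvd hne hqg).natDegree_eq_one_of_irreducible
    hirr
  omega
end
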